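/- Let Ξ be a nonempty compact subset of ℝ^d, let Q : Ξ → ℝ be bounded and upper semicontinuous, let ψ_1, …, ψ_m : Ξ → ℝ be bounded and lower semicontinuous, let γ_1, …, γ_m ∈ ℝ, and let 𝒫 be the associated ambiguity set. For t ∈ ℝ define g(t) = sup { ∫_Ξ Q dP : P a Borel probability measure on Ξ with ∫_Ξ ψ_i dP ≤ γ_i − t for all i }. Assume there exists Δ > 0 such that for every t ∈ [0, Δ] the set { P : ∫_Ξ ψ_i dP ≤ γ_i − t for all i } is nonempty, and assume g is continuous at t = 0. Then there exists a sequence of finitely supported probability measures ∑_{j} p_j(k) δ_{ξ_j(k)} each belonging to 𝒫 (i.e. ∑_j p_j(k) ψ_i(ξ_j(k)) ≤ γ_i for all i) such that ∑_j p_j(k) Q(ξ_j(k)) → sup_{P ∈ 𝒫} ∫_Ξ Q dP as k → ∞. -/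

import Mathlib

/-!
The integral of an integrable map into a finite-dimensional space, with respect to a probability
measure, lies in the convex hull of the values of the map, and not merely in its closure
(Richter's theorem). Otherwise some nonzero linear functional `φ` would satisfy
`φ (∫ f) ≤ φ ∘ f` almost everywhere, hence `φ ∘ f = φ (∫ f)` almost everywhere, and one could
pass to the hyperplane `ker φ` and induct on the dimension. Applied to the map `(Q, ψ₁, …, ψₘ)`,
this turns every member of the ambiguity set into a finitely supported one with exactly the same
moments and the same expected value, so a maximizing sequence can be made finitely supported.
-/

open MeasureTheory Filter

section Integral

variable {E : Type*} [MeasurableSpace E] {μ : Measure E}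
variable {V : Type*} [NormedAddCommGroup V] [NormedSpace ℝ V] [FiniteDimensional ℝ V]

theorem exists_ne_zero_forall_le_of_notMem_convex {s : Set V} (hs : Convex ℝ s)
    (hne : s.Nonempty) {y : V} (hy : y ∉ s) :
    ∃ φ : StrongDual ℝ V, φ ≠ 0 ∧ ∀ x ∈ s, φ y ≤ φ x := by
  by_cases hint : (interior s).Nonempty
  · obtain ⟨φ, hφ, hle⟩ := geometric_hahn_banach_of_nonempty_interior_point hs
      (fun h => hy (interior_subset h)) hint
    exact ⟨-φ, neg_ne_zero.2 hφ, fun x hx => neg_le_neg (hle x hx)⟩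
  · have hspan : vectorSpan ℝ s < ⊤ := by
      rwa [lt_top_iff_ne_top, Ne,
        ← AffineSubspace.affineSpan_eq_top_iff_vectorSpan_eq_top_of_nonempty ℝ V V hne,
        ← hs.interior_nonempty_iff_affineSpan_eq_top]
    obtain ⟨φ, hφ, hker⟩ := Submodule.exists_le_ker_of_lt_top _ hspan
    obtain ⟨x₀, hx₀⟩ := hne
    have hconst : ∀ x ∈ s, φ x = φ x₀ := fun x hx =>
      sub_eq_zero.1 ((map_sub φ x x₀).symm.trans (hker (vsub_mem_vectorSpan ℝ hx hx₀)))
    have hφ' : φ.toContinuousLinearMap ≠ 0 := by simpa using hφ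
    rcases le_total (φ y) (φ x₀) with h | h
    · exact ⟨φ.toContinuousLinearMap, hφ', fun x hx => h.trans_eq (hconst x hx).symm⟩
    · exact ⟨-φ.toContinuousLinearMap, neg_ne_zero.2 hφ',
        fun x hx => neg_le_neg ((hconst x hx).trans_le h)⟩

theorem ae_eq_integral_of_ae_integral_le [IsProbabilityMeasure μ] {f : E → ℝ}
    (hf : Integrable f μ) (h : ∀ᵐ x ∂μ, ∫ z, f z ∂μ ≤ f x) : ∀ᵐ x ∂μ, f x = ∫ z, f z ∂μ := by
  have hconst := (integral_eq_iff_of_ae_le (integrable_const _) hf h).1 (by simp)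
  exact hconst.symm

theorem convex_integral_mem_of_finiteDimensional [IsProbabilityMeasure μ]
    {s : Set V} (hs : Convex ℝ s) {f : E → V} (hf : Integrable f μ) (hfs : ∀ᵐ x ∂μ, f x ∈ s) :
    ∫ x, f x ∂μ ∈ s := by
  induction hn : Module.finrank ℝ V using Nat.strong_induction_on generalizing V with
  | h n ih =>
    by_contra hy
    set y := ∫ x, f x ∂μ with hy_def
    obtain ⟨φ, hφ, hle⟩ := exists_ne_zero_forall_le_of_notMem_convex hs
      (hfs.exists.imp' f fun _ h => h) hy
    have hφy : ∫ x, φ (f x) ∂μ = φ y := φ.integral_comp_comm hf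
    have hφf : ∀ᵐ x ∂μ, φ (f x) = φ y := by
      rw [← hφy]
      refine ae_eq_integral_of_ae_integral_le (φ.integrable_comp hf) ?_
      filter_upwards [hfs] with x hx using hφy.trans_le (hle _ hx)
    obtain ⟨π, hπ⟩ := Submodule.ClosedComplemented.of_finiteDimensional φ.ker
    have hfy : Integrable (fun x => f x - y) μ := hf.sub (integrable_const y)
    have hmem : ∀ᵐ x ∂μ, (π (f x - y) : V) + y ∈ s := by
      filter_upwards [hfs, hφf] with x hx hφx
      have hker : f x - y ∈ φ.ker := by simp [hφx]
      rwa [hπ ⟨_, hker⟩, sub_add_cancel]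
    have hconv : Convex ℝ {v : φ.ker | (v : V) + y ∈ s} :=
      (hs.translate_preimage_left y).linear_preimage φ.ker.subtype
    have hlt : Module.finrank ℝ φ.ker < n := by
      rw [← hn]
      exact Submodule.finrank_lt fun h =>
        hφ (ContinuousLinearMap.coe_inj.1 (LinearMap.ker_eq_top.1 h))
    have hzero : ∫ x, π (f x - y) ∂μ = 0 := by
      rw [π.integral_comp_comm hfy, integral_sub hf (integrable_const y)]
      simp [hy_def]
    have h0 := ih _ hlt hconv (π.integrable_comp hfy) hmem rfl
    simp only [hzero, Set.mem_ofPred_eq, ZeroMemClass.coe_zero, zero_add] at h0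
    exact hy h0

theorem exists_discrete_forall_sum_eq_integral {ι : Type*} [Finite ι] [IsProbabilityMeasure μ]
    {S : Set E} (hS : ∀ᵐ x ∂μ, x ∈ S) {F : ι → E → ℝ} (hF : ∀ i, Integrable (F i) μ) :
    ∃ (k : ℕ) (ξ : Fin k → E) (p : Fin k → ℝ), (∀ j, ξ j ∈ S) ∧ (∀ j, 0 ≤ p j) ∧
      ∑ j, p j = 1 ∧ ∀ i, ∑ j, p j * F i (ξ j) = ∫ x, F i x ∂μ := by
  cases nonempty_fintype ι
  let G : E → ι → ℝ := fun x i => F i x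
  have hmem : ∫ x, G x ∂μ ∈ convexHull ℝ (G '' S) :=
    convex_integral_mem_of_finiteDimensional (convex_convexHull ℝ _) (Integrable.of_eval hF)
      (hS.mono fun x hx => subset_convexHull ℝ _ (Set.mem_image_of_mem G hx))
  obtain ⟨κ, _, w, z, hw_nonneg, hw_sum, hz, hwz⟩ := mem_convexHull_iff_exists_fintype.1 hmem
  choose x hxS hxz using hz
  let e := (Fintype.equivFin κ).symm
  refine ⟨Fintype.card κ, x ∘ e, w ∘ e, fun j => hxS _, fun j => hw_nonneg _,
    (e.sum_comp w).trans hw_sum, fun i => ?_⟩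
  calc ∑ j, w (e j) * F i (x (e j)) = ∑ j, w j * F i (x j) :=
        e.sum_comp fun j => w j * F i (x j)
    _ = (∑ j, w j • z j) i := by simp [Finset.sum_apply, ← hxz, G]
    _ = ∫ x, F i x ∂μ := by rw [hwz, eval_integral hF]

theorem integrable_of_measurable_domRestrict_of_abs_le [IsFiniteMeasure μ] {S : Set E}
    (hS : MeasurableSet S) (hμ : ∀ᵐ x ∂μ, x ∈ S) {f : E → ℝ} (hf : Measurable (S.domRestrict f))
    (hb : ∃ C, ∀ x ∈ S, |f x| ≤ C) : Integrable f μ := by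
  obtain ⟨C, hC⟩ := hb
  have hmeas : AEMeasurable f (μ.restrict S) := aemeasurable_restrict_of_measurable_subtype hS hf
  rw [Measure.restrict_eq_self_of_ae_mem hμ] at hmeas
  exact .of_bound hmeas.aestronglyMeasurable C (hμ.mono hC)

end Integral

section AmbiguitySet

variable {E ι : Type*} [MeasurableSpace E] {S : Set E} {Q : E → ℝ} {ψ : ι → E → ℝ} {γ : ι → ℝ}

/-- The ambiguity set `𝒫` of probability measures on `S` whose moments `∫ ψ i` are at most `γ i`.
A probability measure on `S` is encoded as a measure on the ambient space for which `Sᶜ` is null;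
a moment of a non-integrable `ψ i` counts as `0`. -/
def ambiguitySet (S : Set E) (ψ : ι → E → ℝ) (γ : ι → ℝ) : Set (Measure E) :=
  {P | IsProbabilityMeasure P ∧ P Sᶜ = 0 ∧ ∀ i, ∫ x, ψ i x ∂P ≤ γ i}

theorem integrable_of_mem_ambiguitySet {P : Measure E} (hP : P ∈ ambiguitySet S ψ γ)
    (hS : MeasurableSet S) {f : E → ℝ} (hf : Measurable (S.domRestrict f))
    (hb : ∃ C, ∀ x ∈ S, |f x| ≤ C) : Integrable f P :=
  have := hP.1
  integrable_of_measurable_domRestrict_of_abs_le hS hP.2.1 hf hb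

theorem bddAbove_integral_image_ambiguitySet (hb : ∃ C, ∀ x ∈ S, |Q x| ≤ C) :
    BddAbove ((fun P => ∫ x, Q x ∂P) '' ambiguitySet S ψ γ) := by
  obtain ⟨C, hC⟩ := hb
  refine ⟨C, ?_⟩
  rintro _ ⟨P, ⟨_, hPS, -⟩, rfl⟩
  have hPS : ∀ᵐ x ∂P, x ∈ S := hPS
  calc ∫ x, Q x ∂P ≤ ‖∫ x, Q x ∂P‖ := Real.le_norm_self _
    _ ≤ C * P.real Set.univ := norm_integral_le_of_norm_le_const (hPS.mono hC)
    _ = C := by simp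

theorem exists_discrete_sum_eq_of_mem_ambiguitySet [Finite ι] {P : Measure E}
    (hP : P ∈ ambiguitySet S ψ γ) (hQ : Integrable Q P) (hψ : ∀ i, Integrable (ψ i) P) :
    ∃ (k : ℕ) (ξ : Fin k → E) (p : Fin k → ℝ), (∀ j, ξ j ∈ S) ∧ (∀ j, 0 ≤ p j) ∧
      ∑ j, p j = 1 ∧ (∀ i, ∑ j, p j * ψ i (ξ j) ≤ γ i) ∧
      ∑ j, p j * Q (ξ j) = ∫ x, Q x ∂P := by
  obtain ⟨_, hPS, hPψ⟩ := hP
  obtain ⟨k, ξ, p, hξ, hp, hsum, heq⟩ := exists_discrete_forall_sum_eq_integral (μ := P) hPS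
    (F := fun o : Option ι => o.elim Q ψ) (Option.forall.2 ⟨hQ, hψ⟩)
  exact ⟨k, ξ, p, hξ, hp, hsum, fun i => (heq (some i)).trans_le (hPψ i), heq none⟩

theorem discrete_sequence_converging_to_WCEV_general [Finite ι]
    (hne : (ambiguitySet S ψ γ).Nonempty)
    (hQ : ∀ P ∈ ambiguitySet S ψ γ, Integrable Q P)
    (hψ : ∀ P ∈ ambiguitySet S ψ γ, ∀ i, Integrable (ψ i) P)
    (hbdd : BddAbove ((fun P => ∫ x, Q x ∂P) '' ambiguitySet S ψ γ)) :
    ∃ (k : ℕ → ℕ) (ξ : (n : ℕ) → Fin (k n) → E) (p : (n : ℕ) → Fin (k n) → ℝ),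
      (∀ n j, ξ n j ∈ S) ∧ (∀ n j, 0 ≤ p n j) ∧ (∀ n, ∑ j, p n j = 1) ∧
      (∀ n i, ∑ j, p n j * ψ i (ξ n j) ≤ γ i) ∧
      Tendsto (fun n => ∑ j, p n j * Q (ξ n j)) atTop
        (nhds (sSup ((fun P => ∫ x, Q x ∂P) '' ambiguitySet S ψ γ))) := by
  obtain ⟨u, -, hu, hu_mem⟩ := exists_seq_tendsto_sSup (hne.image _) hbdd
  choose P hP hPu using hu_mem
  choose k ξ p hξ hp hsum hfeas hQsum using fun n =>
    exists_discrete_sum_eq_of_mem_ambiguitySet (hP n) (hQ _ (hP n)) (hψ _ (hP n))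
  exact ⟨k, ξ, p, hξ, hp, hsum, hfeas, hu.congr fun n => ((hQsum n).trans (hPu n)).symm⟩

end AmbiguitySet

/-- Under upper semicontinuity of `Q`, lower semicontinuity of the
`ψ_i`, a Slater-type condition (the tightened ambiguity set is nonempty for all
`t ∈ [0, Δ]`) and continuity at `0` of the perturbed value function `g`, there is a
sequence of finitely supported probability distributions, each belonging to the
ambiguity set, whose weighted sums of `Q`-values converge to the worst-case expected
value. -/
theorem discrete_sequence_converging_to_WCEV
    (d m : ℕ) (Ξ : Set (EuclideanSpace ℝ (Fin d)))
    (hΞne : Ξ.Nonempty) (hΞc : IsCompact Ξ)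
    (Q : EuclideanSpace ℝ (Fin d) → ℝ)
    (hQu : UpperSemicontinuousOn Q Ξ) (hQb : ∃ C, ∀ x ∈ Ξ, |Q x| ≤ C)
    (ψ : Fin m → EuclideanSpace ℝ (Fin d) → ℝ)
    (hψl : ∀ i, LowerSemicontinuousOn (ψ i) Ξ)
    (hψb : ∀ i, ∃ C, ∀ x ∈ Ξ, |ψ i x| ≤ C)
    (γ : Fin m → ℝ)
    (hSlater : ∃ Δ : ℝ, 0 < Δ ∧ ∀ t ∈ Set.Icc (0 : ℝ) Δ,
      ∃ P : Measure (EuclideanSpace ℝ (Fin d)),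
        IsProbabilityMeasure P ∧ P Ξᶜ = 0 ∧ ∀ i, ∫ x, ψ i x ∂P ≤ γ i - t)
    (hg : ContinuousAt (fun t : ℝ =>
      sSup {r : ℝ | ∃ P : Measure (EuclideanSpace ℝ (Fin d)),
        (IsProbabilityMeasure P ∧ P Ξᶜ = 0 ∧ ∀ i, ∫ x, ψ i x ∂P ≤ γ i - t) ∧
        (∫ x, Q x ∂P) = r}) 0) :
    ∃ (k : ℕ → ℕ) (ξ : (n : ℕ) → Fin (k n) → EuclideanSpace ℝ (Fin d))
      (p : (n : ℕ) → Fin (k n) → ℝ),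
      (∀ n j, ξ n j ∈ Ξ) ∧ (∀ n j, 0 ≤ p n j) ∧ (∀ n, ∑ j, p n j = 1) ∧
      (∀ n i, ∑ j, p n j * ψ i (ξ n j) ≤ γ i) ∧
      Tendsto (fun n => ∑ j, p n j * Q (ξ n j)) atTop
        (nhds (sSup {r : ℝ | ∃ P : Measure (EuclideanSpace ℝ (Fin d)),
          (IsProbabilityMeasure P ∧ P Ξᶜ = 0 ∧ ∀ i, ∫ x, ψ i x ∂P ≤ γ i) ∧
          (∫ x, Q x ∂P) = r})) := by
  obtain ⟨Δ, hΔ, hfeas⟩ := hSlater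
  have hne : (ambiguitySet Ξ ψ γ).Nonempty := by
    simpa only [sub_zero, ambiguitySet] using! hfeas 0 ⟨le_rfl, hΔ.le⟩
  exact discrete_sequence_converging_to_WCEV_general hne
    (fun P hP => integrable_of_mem_ambiguitySet hP hΞc.measurableSet
      (upperSemicontinuousOn_iff_restrict.2 hQu).measurable hQb)
    (fun P hP i => integrable_of_mem_ambiguitySet hP hΞc.measurableSet
      (lowerSemicontinuous_restrict_iff.2 (hψl i)).measurable (hψb i))
    (bddAbove_integral_image_ambiguitySet hQb)
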